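/- arXiv:2101.06045 — 2 statements merged into one kernel-verified Lean document; each statement's English description precedes it below -/
import Mathlib

section
/- The entire function g determined by g(z) = −(12/z)(√z sin(√z) + 2cos(√z) − 2) for z ≠ 0 and g(0) = 0 belongs to the class S*_e, and the entire function h determined by h(z) = (12/z)(√z sinh(√z) − 2cosh(√z) + 2) for z ≠ 0 and h(0) = 0 belongs to the class S*_e. -/
/-!
With `H(w) = ∑ 12 (2k+2)/(2k+4)! wᵏ`, the power series of `cosh` and `sinh` give
`12 (s sinh s - 2 cosh s + 2) = (s²)² H(s²)` for every `s` (`twelve_mul_eq`). Taking `s = √z`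
the second function of the theorem is `z H(z)`, and taking `s = i √z` the first is `z H(-z)`.

The coefficients of `H` are at most `15⁻ᵏ`, with leading coefficient `1`, so `|H - 1| ≤ 1/4` on the
disk of radius `2`. The Cauchy estimate on circles of radius `1` then gives `|H'| ≤ 1/4` on the unit
disk, so that `z f'/f = 1 + z H'/H` lies within `1/3` of `1`, and its principal logarithm has modulus
at most `1/2` (`isSe_of_near_one`).
-/

open Complex Set

def unitDisk : Set ℂ := Metric.ball 0 1

def expD : Set ℂ := Complex.exp '' unitDisk

/-- The generalized and normalized Bessel function
`φ_{κ,c}(z) = ∑ ((-c/4)^n / ((κ)_n n!)) zⁿ`. -/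
noncomputable def besselPhi (κ c : ℂ) (z : ℂ) : ℂ :=
  ∑' n : ℕ, ((-c / 4) ^ n / ((ascPochhammer ℂ n).eval κ * (n.factorial : ℂ))) * z ^ n

/-- Membership in the class `S*_e` of exponential starlike functions. -/
def IsSe (f : ℂ → ℂ) : Prop :=
  AnalyticOnNhd ℂ f unitDisk ∧ f 0 = 0 ∧ deriv f 0 = 1 ∧
    ∀ z ∈ unitDisk \ {0}, f z ≠ 0 ∧ z * deriv f z / f z ∈ expD

/-- Coefficients of the series `H` with `12 (s sinh s - 2 cosh s + 2) = s⁴ H(s²)`. -/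
noncomputable def liberaCoeff (k : ℕ) : ℝ := 12 * (2 * k + 2) / (2 * k + 4).factorial

/-- The entire function `H(w) = ∑ liberaCoeff k * wᵏ`. -/
noncomputable def liberaH (w : ℂ) : ℂ := ∑' k : ℕ, (liberaCoeff k : ℂ) * w ^ k

lemma liberaCoeff_nonneg (k : ℕ) : 0 ≤ liberaCoeff k := by
  unfold liberaCoeff; positivity

lemma liberaCoeff_zero : liberaCoeff 0 = 1 := by
  norm_num [liberaCoeff, Nat.factorial]

lemma liberaCoeff_le (k : ℕ) : liberaCoeff k ≤ (1 / 15) ^ k := by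
  induction k with
  | zero => simp [liberaCoeff_zero]
  | succ k ih =>
    have hfac : ((2 * (k + 1) + 4).factorial : ℝ)
        = (2 * k + 6) * ((2 * k + 5) * (2 * k + 4).factorial) := by
      rw [show 2 * (k + 1) + 4 = (2 * k + 4) + 1 + 1 by ring, Nat.factorial_succ,
        Nat.factorial_succ]
      push_cast; ring
    have hratio : liberaCoeff (k + 1) ≤ 1 / 15 * liberaCoeff k := by
      have hpos : (0 : ℝ) < (2 * k + 4).factorial := by positivity
      have hk : (0 : ℝ) ≤ k := by positivity
      unfold liberaCoeff
      rw [hfac, ← mul_div_assoc, div_le_div_iff₀ (by positivity) hpos]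
      push_cast
      have hpoly : 12 * (2 * ((k : ℝ) + 1) + 2)
          ≤ 1 / 15 * (12 * (2 * (k : ℝ) + 2)) * ((2 * k + 6) * (2 * k + 5)) := by
        nlinarith [mul_nonneg hk hk, mul_nonneg hk (mul_nonneg hk hk)]
      nlinarith [mul_le_mul_of_nonneg_right hpoly hpos.le]
    rw [pow_succ]
    linarith

lemma norm_liberaTerm_le (k : ℕ) {w : ℂ} (hw : w ∈ Metric.ball (0 : ℂ) 2) :
    ‖(liberaCoeff k : ℂ) * w ^ k‖ ≤ (2 / 15 : ℝ) ^ k := by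
  have hw' : ‖w‖ ≤ 2 := by simpa using (mem_ball_zero_iff.1 hw).le
  rw [norm_mul, norm_pow, Complex.norm_real, Real.norm_of_nonneg (liberaCoeff_nonneg k),
    show (2 / 15 : ℝ) = 1 / 15 * 2 by norm_num, mul_pow]
  gcongr
  exact liberaCoeff_le k

lemma summable_two_fifteenths : Summable fun k : ℕ => (2 / 15 : ℝ) ^ k :=
  summable_geometric_of_lt_one (by norm_num) (by norm_num)

lemma differentiableOn_liberaH : DifferentiableOn ℂ liberaH (Metric.ball 0 2) :=
  Complex.differentiableOn_tsum_of_summable_norm summable_two_fifteenths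
    (fun k => by fun_prop) Metric.isOpen_ball (fun k _ hw => norm_liberaTerm_le k hw)

lemma liberaH_zero : liberaH 0 = 1 := by
  unfold liberaH
  rw [tsum_eq_single 0]
  · simp [liberaCoeff_zero]
  · intro k hk
    simp [hk]

lemma norm_liberaH_sub_one_le {w : ℂ} (hw : w ∈ Metric.ball (0 : ℂ) 2) :
    ‖liberaH w - 1‖ ≤ 1 / 4 := by
  have hs : Summable fun k : ℕ => (liberaCoeff k : ℂ) * w ^ k :=
    Summable.of_norm_bounded summable_two_fifteenths (fun k => norm_liberaTerm_le k hw)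
  have htail : liberaH w - 1 = ∑' k : ℕ, (liberaCoeff (k + 1) : ℂ) * w ^ (k + 1) := by
    unfold liberaH
    rw [hs.tsum_eq_zero_add]
    simp [liberaCoeff_zero]
  have hgeom : HasSum (fun k : ℕ => (2 / 15 : ℝ) ^ (k + 1)) (2 / 13) := by
    have h := (hasSum_geometric_of_lt_one (r := 2 / 15) (by norm_num) (by norm_num)).mul_left
      (2 / 15)
    simp only [← pow_succ'] at h
    norm_num at h ⊢
    exact h
  rw [htail]
  exact (tsum_of_norm_bounded hgeom fun k => norm_liberaTerm_le (k + 1) hw).trans (by norm_num)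

lemma twelve_mul_eq (s : ℂ) :
    12 * (s * Complex.sinh s - 2 * Complex.cosh s + 2) = (s ^ 2) ^ 2 * liberaH (s ^ 2) := by
  -- the constant and the `s ^ 2` terms of `s * sinh s - 2 * cosh s + 2` vanish
  have hc : HasSum (fun n : ℕ => s ^ (2 * (n + 1)) / ((2 * (n + 1)).factorial : ℂ))
      (Complex.cosh s - 1) := by
    have h := (hasSum_nat_add_iff' 1).2 (Complex.hasSum_cosh s)
    simpa using h
  have hd := ((Complex.hasSum_sinh s).mul_left s).sub (hc.mul_left 2)
  have hd' := ((hasSum_nat_add_iff' 1).2 hd).mul_left 12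
  have hterm : (fun n : ℕ => 12 * (s * (s ^ (2 * (n + 1) + 1) / ((2 * (n + 1) + 1).factorial : ℂ))
      - 2 * (s ^ (2 * (n + 1 + 1)) / ((2 * (n + 1 + 1)).factorial : ℂ))))
      = fun n : ℕ => (s ^ 2) ^ 2 * ((liberaCoeff n : ℂ) * (s ^ 2) ^ n) := by
    funext n
    have h4 : ((2 * n + 4).factorial : ℂ) = (2 * n + 4) * (2 * n + 3).factorial := by
      rw [show 2 * n + 4 = (2 * n + 3) + 1 by ring, Nat.factorial_succ]
      push_cast; ring
    have hne : ((2 * n + 3).factorial : ℂ) ≠ 0 := by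
      exact_mod_cast Nat.factorial_ne_zero _
    have hne' : (2 * n + 4 : ℂ) ≠ 0 := by
      exact_mod_cast Nat.succ_ne_zero (2 * n + 3)
    unfold liberaCoeff
    push_cast
    rw [show 2 * (n + 1) + 1 = 2 * n + 3 by ring, show 2 * (n + 1 + 1) = 2 * n + 4 by ring, h4,
      ← pow_mul, ← pow_mul]
    field_simp
    ring
  rw [hterm] at hd'
  unfold liberaH
  rw [← tsum_mul_left, hd'.tsum_eq]
  simp
  ring

/-- If `G` is within `1/4` of `1` on the disk of radius `2`, then `z G(z)` is in `S*_e`. -/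
lemma isSe_of_near_one {G : ℂ → ℂ} (hG : DifferentiableOn ℂ G (Metric.ball 0 2))
    (hG0 : G 0 = 1) (hb : ∀ w ∈ Metric.ball (0 : ℂ) 2, ‖G w - 1‖ ≤ 1 / 4) :
    IsSe (fun z => z * G z) := by
  have hsub : unitDisk ⊆ Metric.ball (0 : ℂ) 2 := Metric.ball_subset_ball (by norm_num)
  have hGat : ∀ z ∈ Metric.ball (0 : ℂ) 2, DifferentiableAt ℂ G z := fun z hz =>
    hG.differentiableAt (Metric.isOpen_ball.mem_nhds hz)
  have hder : ∀ z ∈ unitDisk, deriv (fun z => z * G z) z = G z + z * deriv G z := by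
    intro z hz
    have h := (hasDerivAt_id' z).fun_mul (hGat z (hsub hz)).hasDerivAt
    simpa using h.deriv
  refine ⟨?_, by simp, ?_, ?_⟩
  · refine DifferentiableOn.analyticOnNhd ?_ Metric.isOpen_ball
    exact (differentiableOn_id.mul hG).mono hsub
  · rw [hder 0 (by simp [unitDisk])]
    simp [hG0]
  · rintro z ⟨hz, hz0⟩
    have hz0 : z ≠ 0 := hz0
    have hz1 : ‖z‖ < 1 := by simpa [unitDisk] using hz
    have hcl : Metric.closedBall z 1 ⊆ Metric.ball (0 : ℂ) 2 := by
      intro w hw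
      rw [mem_closedBall_iff_norm] at hw
      rw [mem_ball_zero_iff]
      calc ‖w‖ = ‖(w - z) + z‖ := by ring_nf
        _ ≤ ‖w - z‖ + ‖z‖ := norm_add_le _ _
        _ < 2 := by linarith
    have hG' : ‖deriv G z‖ ≤ 1 / 4 := by
      have h : ‖deriv (fun w => G w - 1) z‖ ≤ (1 / 4) / 1 := by
        refine Complex.norm_deriv_le_of_forall_mem_sphere_norm_le one_pos ?_ ?_
        · refine DifferentiableOn.diffContOnCl ?_
          rw [closure_ball z one_ne_zero]
          exact (hG.mono hcl).sub_const 1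
        · exact fun w hw => hb w (hcl (Metric.sphere_subset_closedBall hw))
      simpa [deriv_sub_const] using h
    have hGlow : 3 / 4 ≤ ‖G z‖ := by
      have h1 := norm_sub_norm_le (1 : ℂ) (1 - G z)
      have h2 := hb z (hsub hz)
      rw [norm_sub_rev] at h2
      simp only [norm_one, sub_sub_cancel] at h1
      linarith
    have hGne : G z ≠ 0 := by
      intro h
      rw [h, norm_zero] at hGlow
      norm_num at hGlow
    refine ⟨mul_ne_zero hz0 hGne, ?_⟩
    rw [hder z hz]
    set u : ℂ := z * deriv G z / G z with hu
    have hval : z * (G z + z * deriv G z) / (z * G z) = 1 + u := by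
      rw [hu]; field_simp
    have hunorm : ‖u‖ ≤ 1 / 3 := by
      rw [hu, norm_div, norm_mul, div_le_iff₀ (by linarith)]
      nlinarith [norm_nonneg z, norm_nonneg (deriv G z)]
    have hlog := Complex.norm_log_one_add_half_le_self (z := u) (by linarith)
    refine ⟨Complex.log (1 + u), ?_, ?_⟩
    · simp only [unitDisk, mem_ball_zero_iff]
      linarith
    · rw [hval, Complex.exp_log]
      intro h
      have : u = -1 := by linear_combination h
      rw [this] at hunorm
      norm_num at hunorm

theorem libera_sin_sqrt_exponential_starlike :
    IsSe (fun z => if z = 0 then 0 else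
      -(12 / z) * (z ^ ((1 : ℂ) / 2) * Complex.sin (z ^ ((1 : ℂ) / 2)) +
        2 * Complex.cos (z ^ ((1 : ℂ) / 2)) - 2)) ∧
      IsSe (fun z => if z = 0 then 0 else
        (12 / z) * (z ^ ((1 : ℂ) / 2) * Complex.sinh (z ^ ((1 : ℂ) / 2)) -
          2 * Complex.cosh (z ^ ((1 : ℂ) / 2)) + 2)) := by
  have hsq : ∀ z : ℂ, (z ^ ((1 : ℂ) / 2)) ^ 2 = z := fun z => by
    rw [one_div]; exact_mod_cast Complex.cpow_nat_inv_pow z two_ne_zero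
  have hneg : MapsTo (fun z : ℂ => -z) (Metric.ball 0 2) (Metric.ball 0 2) := by
    intro z hz
    simpa using hz
  constructor
  · convert isSe_of_near_one (G := fun z => liberaH (-z))
      (differentiableOn_liberaH.comp differentiable_neg.differentiableOn hneg)
      (by simp [liberaH_zero]) (fun w hw => norm_liberaH_sub_one_le (hneg hw)) using 1
    funext z
    split_ifs with hz
    · simp [hz]
    · have h := twelve_mul_eq (z ^ ((1 : ℂ) / 2) * I)
      rw [Complex.sinh_mul_I, Complex.cosh_mul_I, mul_pow, hsq, I_sq, mul_neg_one] at h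
      field_simp
      linear_combination h - 12 * z ^ ((1 : ℂ) / 2) * Complex.sin (z ^ ((1 : ℂ) / 2)) * I_sq
  · convert isSe_of_near_one differentiableOn_liberaH liberaH_zero
      (fun w hw => norm_liberaH_sub_one_le hw) using 1
    funext z
    split_ifs with hz
    · simp [hz]
    · have h := twelve_mul_eq (z ^ ((1 : ℂ) / 2))
      rw [hsq] at h
      field_simp
      linear_combination h
end

section
/- Let ν ∈ ℝ with ν ≥ 17/12. Then the functions h₁(z) = z φ_{ν+1,1}(z²) and h₂(z) = z φ_{ν+1,−1}(z²), which equal 2^ν Γ(ν+1) z^{1−ν} J_ν(z) and 2^ν Γ(ν+1) z^{1−ν} I_ν(z) respectively, both belong to the class S*_e. -/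
/-!
Only the size of the Taylor coefficients of `φ_{κ,±1}` matters. For real `κ ≥ 2` one has
`|(κ)_n| ≥ 2 ^ n`, so the `n`-th coefficient is at most `(1/8) ^ n` in modulus.
If `g(w) = ∑ a_n w ^ n` with `a_0 = 1` and `|a_n| ≤ (1/8) ^ n`, then on the unit disk
`|g(w) - 1| ≤ 1/7` and `|g'(w)| ≤ ∑ n (1/8) ^ n = 8/49`. For `f(z) = z g(z²)` this gives
`z f'(z)/f(z) = 1 + u` with `u = 2 z² g'(z²)/g(z²)` and `|u| ≤ 2 (8/49)/(6/7) = 8/21 < 1/2`,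
whence `|log (1 + u)| ≤ (3/2)|u| < 1`, i.e. `z f'(z)/f(z) ∈ exp(𝔻)`.
The general criterion is `isSe_of_coeff_bound`, the coefficient estimate `norm_besselCoeff_le`.
-/

open Complex Set

lemma norm_powerSeries_term_le {a : ℕ → ℂ} (ha : ∀ n, ‖a n‖ ≤ (1 / 8 : ℝ) ^ n) {w : ℂ}
    (hw : ‖w‖ < 1) (n : ℕ) : ‖a n * w ^ n‖ ≤ (1 / 8 : ℝ) ^ n := by
  rw [norm_mul, norm_pow]
  exact (mul_le_of_le_one_right (norm_nonneg _) (pow_le_one₀ (norm_nonneg _) hw.le)).trans (ha n)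

lemma summable_eighth : Summable (fun n : ℕ => (1 / 8 : ℝ) ^ n) :=
  summable_geometric_of_lt_one (by norm_num) (by norm_num)

lemma hasSum_nat_mul_eighth : HasSum (fun n : ℕ => (n : ℝ) * (1 / 8 : ℝ) ^ n) (8 / 49) := by
  have := hasSum_coe_mul_geometric_of_norm_lt_one (r := (1 / 8 : ℝ)) (by norm_num)
  norm_num at this ⊢
  exact this

lemma norm_powerSeries_sub_one_le {a : ℕ → ℂ} (ha0 : a 0 = 1)
    (ha : ∀ n, ‖a n‖ ≤ (1 / 8 : ℝ) ^ n) {w : ℂ} (hw : ‖w‖ < 1) :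
    ‖(∑' n, a n * w ^ n) - 1‖ ≤ 1 / 7 := by
  have hs : Summable (fun n => a n * w ^ n) :=
    Summable.of_norm_bounded summable_eighth (norm_powerSeries_term_le ha hw)
  rw [hs.tsum_eq_zero_add]
  simp only [ha0, pow_zero, mul_one, add_sub_cancel_left]
  have hg : HasSum (fun n : ℕ => (1 / 8 : ℝ) ^ (n + 1)) (1 / 7) := by
    have := (hasSum_geometric_of_lt_one (r := (1 / 8 : ℝ)) (by norm_num) (by norm_num)).mul_right
      (1 / 8)
    simp only [pow_succ]
    norm_num at this ⊢
    exact this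
  exact tsum_of_norm_bounded hg fun n => norm_powerSeries_term_le ha hw (n + 1)

/-- Termwise differentiation, with the resulting bound on the derivative. -/
lemma exists_hasDerivAt_powerSeries {a : ℕ → ℂ} (ha : ∀ n, ‖a n‖ ≤ (1 / 8 : ℝ) ^ n) {w : ℂ}
    (hw : ‖w‖ < 1) :
    ∃ d : ℂ, HasDerivAt (fun x => ∑' n, a n * x ^ n) d w ∧ ‖d‖ ≤ 8 / 49 := by
  have hb : ∀ (n : ℕ) (y : ℂ), y ∈ Metric.ball (0 : ℂ) 1 →
      ‖a n * ((n : ℂ) * y ^ (n - 1))‖ ≤ (n : ℝ) * (1 / 8 : ℝ) ^ n := by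
    intro n y hy
    have hy' : ‖y‖ < 1 := by simpa using hy
    have h1 : ‖y‖ ^ (n - 1) ≤ 1 := pow_le_one₀ (norm_nonneg _) hy'.le
    rw [norm_mul, norm_mul, norm_pow, Complex.norm_natCast, mul_comm (n : ℝ) ((1 / 8 : ℝ) ^ n)]
    exact mul_le_mul (ha n) (mul_le_of_le_one_right (by positivity) h1) (by positivity)
      (by positivity)
  have hwb : w ∈ Metric.ball (0 : ℂ) 1 := by simpa using hw
  refine ⟨∑' n : ℕ, a n * ((n : ℂ) * w ^ (n - 1)), ?_, ?_⟩
  · exact hasDerivAt_tsum_of_isPreconnected hasSum_nat_mul_eighth.summable Metric.isOpen_ball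
      (convex_ball (0 : ℂ) 1).isPreconnected
      (fun n y _ => (hasDerivAt_pow n y).const_mul (a n)) hb hwb
      (Summable.of_norm_bounded summable_eighth (norm_powerSeries_term_le ha hw)) hwb
  · exact tsum_of_norm_bounded hasSum_nat_mul_eighth fun n => hb n w hwb

/-- A coefficient criterion for membership of `z ↦ z g(z²)` in `S*_e`. -/
lemma isSe_of_coeff_bound {a : ℕ → ℂ} (ha0 : a 0 = 1) (ha : ∀ n, ‖a n‖ ≤ (1 / 8 : ℝ) ^ n) :
    IsSe (fun z => z * ∑' n, a n * (z ^ 2) ^ n) := by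
  have hsq : ∀ z : ℂ, ‖z‖ < 1 → ‖z ^ 2‖ < 1 := fun z hz => by
    rw [norm_pow]
    exact pow_lt_one₀ (norm_nonneg _) hz two_ne_zero
  have hder : ∀ z : ℂ, ‖z‖ < 1 → ∃ d : ℂ, ‖d‖ ≤ 8 / 49 ∧
      HasDerivAt (fun z : ℂ => z * ∑' n, a n * (z ^ 2) ^ n)
        ((∑' n, a n * (z ^ 2) ^ n) + z * (d * (2 * z))) z := by
    intro z hz
    obtain ⟨d, hd, hdn⟩ := exists_hasDerivAt_powerSeries ha (hsq z hz)
    refine ⟨d, hdn, ?_⟩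
    have h2 : HasDerivAt (fun x : ℂ => x ^ 2) (2 * z) z := by simpa using hasDerivAt_pow 2 z
    have h3 := HasDerivAt.comp z hd h2
    have h4 := (hasDerivAt_id z).mul h3
    simp only [id, one_mul] at h4
    exact h4
  refine ⟨?_, by simp, ?_, ?_⟩
  · refine DifferentiableOn.analyticOnNhd (fun z hz => ?_) Metric.isOpen_ball
    obtain ⟨d, -, hd⟩ := hder z (by simpa [unitDisk] using hz)
    exact hd.differentiableAt.differentiableWithinAt
  · obtain ⟨d, -, hd⟩ := hder 0 (by simp)
    rw [hd.deriv, tsum_eq_single 0 (fun n hn => by simp [hn])]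
    simp [ha0]
  · rintro z ⟨hz, hz0⟩
    have hz1 : ‖z‖ < 1 := by simpa [unitDisk] using hz
    have hz0' : z ≠ 0 := by simpa using hz0
    obtain ⟨d, hdn, hd⟩ := hder z hz1
    have hg := norm_powerSeries_sub_one_le ha0 ha (hsq z hz1)
    rw [hd.deriv]
    beta_reduce
    generalize (∑' n, a n * (z ^ 2) ^ n) = g at hg ⊢
    have hgn : 6 / 7 ≤ ‖g‖ := by
      have := norm_sub_norm_le 1 g
      rw [norm_one, norm_sub_rev] at this
      linarith
    have hg0 : g ≠ 0 := norm_pos_iff.mp (by linarith)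
    refine ⟨mul_ne_zero hz0' hg0, ?_⟩
    have hu : ‖2 * z ^ 2 * d / g‖ ≤ 8 / 21 := by
      rw [norm_div, norm_mul, norm_mul, Complex.norm_two, div_le_iff₀ (by linarith)]
      have := mul_le_mul (hsq z hz1).le hdn (norm_nonneg _) zero_le_one
      linarith
    have he : z * (g + z * (d * (2 * z))) / (z * g) = 1 + 2 * z ^ 2 * d / g := by
      field_simp
    rw [he]
    generalize 2 * z ^ 2 * d / g = u at hu ⊢
    refine ⟨Complex.log (1 + u), ?_, Complex.exp_log fun h0 => ?_⟩
    · have := Complex.norm_log_one_add_half_le_self (z := u) (by linarith)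
      simp only [unitDisk, Metric.mem_ball, dist_zero_right]
      linarith
    · rw [← neg_eq_of_add_eq_zero_right h0] at hu
      norm_num at hu

lemma two_pow_le_norm_ascPochhammer {κ : ℝ} (hκ : 2 ≤ κ) (n : ℕ) :
    (2 : ℝ) ^ n ≤ ‖(ascPochhammer ℂ n).eval (κ : ℂ)‖ := by
  induction n with
  | zero => simp
  | succ k ih =>
    rw [ascPochhammer_succ_eval, norm_mul, pow_succ]
    refine mul_le_mul ih ?_ (by norm_num) (norm_nonneg _)
    refine le_trans ?_ (Complex.re_le_norm _)
    simp only [add_re, ofReal_re, natCast_re]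
    have : (0 : ℝ) ≤ k := k.cast_nonneg
    linarith

lemma norm_besselCoeff_le {κ : ℝ} (hκ : 2 ≤ κ) {c : ℂ} (hc : ‖c‖ = 1) (n : ℕ) :
    ‖(-c / 4) ^ n / ((ascPochhammer ℂ n).eval (κ : ℂ) * (n.factorial : ℂ))‖
      ≤ (1 / 8 : ℝ) ^ n := by
  have hp := two_pow_le_norm_ascPochhammer hκ n
  have hf : (1 : ℝ) ≤ n.factorial := by exact_mod_cast n.factorial_pos
  have h2 : (0 : ℝ) < 2 ^ n := by positivity
  have hden : (2 : ℝ) ^ n ≤ ‖(ascPochhammer ℂ n).eval (κ : ℂ)‖ * n.factorial :=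
    hp.trans (le_mul_of_one_le_right (norm_nonneg _) hf)
  rw [norm_div, norm_mul, norm_pow, norm_div, norm_neg, hc, Complex.norm_natCast,
    div_le_iff₀ (h2.trans_le hden)]
  calc (1 / ‖(4 : ℂ)‖) ^ n = (1 / 8 : ℝ) ^ n * 2 ^ n := by
        rw [← mul_pow]; norm_num
    _ ≤ _ := mul_le_mul_of_nonneg_left hden (by positivity)

theorem bessel_modifiedBessel_sq_exponential_starlike (ν : ℝ) (h : 17 / 12 ≤ ν) :
    IsSe (fun z => z * besselPhi ((ν : ℂ) + 1) 1 (z ^ 2)) ∧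
      IsSe (fun z => z * besselPhi ((ν : ℂ) + 1) (-1) (z ^ 2)) := by
  have hκ : (2 : ℝ) ≤ ν + 1 := by linarith
  have key : ∀ c : ℂ, ‖c‖ = 1 → IsSe (fun z => z * besselPhi ((ν : ℂ) + 1) c (z ^ 2)) := by
    intro c hc
    refine isSe_of_coeff_bound (by simp) fun n => ?_
    have := norm_besselCoeff_le hκ hc n
    push_cast at this
    exact this
  exact ⟨key 1 (by simp), key (-1) (by simp)⟩
end
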